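/- Fix a prime p. Let (R,m,k) be an F-finite noetherian local domain of characteristic p with fraction field K, let C be a Cartier subalgebra of C_R with a_e(R,C) ≠ 0 for some e ≥ 1, and let M be a finitely generated R-module with generic rank g := dim_K(K ⊗_R M). For each e ≥ 1, let M^♮_e be the additive subgroup of { additive maps ϑ : M → R with ϑ(r^{p^e}·x) = r·ϑ(x) } generated by the maps x ↦ φ(ρ(x)) with φ ∈ C_e and ρ ∈ Hom_R(M,R), and set a_e(M^♮) := length_R( M^♮_e / { ϑ ∈ M^♮_e : ϑ(M) ⊆ m } ). Let n₀ := gcd{ e ≥ 1 : a_e(R,C) ≠ 0 }, d := dim R, and r_k := [k^{1/p} : k]. If the sequence e ↦ a_{n₀e}(R,C)/(p^{n₀e·d}·r_k^{n₀e}) converges to a real number s, then the sequence e ↦ a_{n₀e}(M^♮)/(p^{n₀e·d}·r_k^{n₀e}) converges to g·s. -/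

import Mathlib

/-- `p^e`-semilinear additive maps ("Cartier maps"):
`φ (a^{p^e} • x) = a • φ x`. -/
def IsCartierMap (p : ℕ) (A : Type*) [CommSemiring A] {X Y : Type*} [AddCommMonoid X]
    [AddCommMonoid Y] [Module A X] [Module A Y] (e : ℕ) (φ : X →+ Y) : Prop :=
  ∀ (a : A) (x : X), φ (a ^ p ^ e • x) = a • φ x

/-- A Cartier structure (Cartier subalgebra of `C_X`) on an `A`-module `X`. -/
structure CartierStructure (p : ℕ) (A : Type*) [CommRing A] (X : Type*) [AddCommGroup X]
    [Module A X] where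
  carrier : ℕ → Set (X →+ X)
  cartier_mem : ∀ e, 1 ≤ e → ∀ φ ∈ carrier e, IsCartierMap p A e φ
  add_mem : ∀ e, 1 ≤ e → ∀ φ ∈ carrier e, ∀ ψ ∈ carrier e, φ + ψ ∈ carrier e
  smul_mem : ∀ e, 1 ≤ e → ∀ (a : A), ∀ φ ∈ carrier e,
    (DistribMulAction.toAddMonoidHom X a).comp φ ∈ carrier e
  mul_mem : ∀ e, 1 ≤ e → ∀ (a : A), ∀ φ ∈ carrier e,
    φ.comp (DistribMulAction.toAddMonoidHom X a) ∈ carrier e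
  comp_mem : ∀ e d, 1 ≤ e → 1 ≤ d → ∀ φ ∈ carrier e, ∀ ψ ∈ carrier d,
    φ.comp ψ ∈ carrier (e + d)

/-- The length of a module, as the Krull dimension of its submodule lattice. -/
noncomputable def moduleLength (A : Type*) [Ring A] (M : Type*) [AddCommGroup M]
    [Module A M] : WithBot ℕ∞ :=
  Order.krullDim (Submodule A M)

/-- The splitting number `a_e`: the length (as a left `A`-module) of `D/D^{ns}` where
`D^{ns} = {ϑ ∈ D | ϑ(X) ⊆ m}`, realized as the image of the span of `D` in the quotient by
the span of `D^{ns}`. -/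
noncomputable def splitNum (A : Type*) [CommRing A] [IsLocalRing A]
    {X : Type*} [AddCommMonoid X] (D : Set (X →+ A)) : WithBot ℕ∞ :=
  moduleLength A
    ↥(Submodule.map
        (Submodule.span A { ϑ ∈ D | ∀ x, ϑ x ∈ IsLocalRing.maximalIdeal A }).mkQ
        (Submodule.span A D))

/-- Type synonym for a ring viewed as a module over itself via Frobenius. -/
def FrobMod (A : Type*) := A

instance {A : Type*} [AddCommGroup A] : AddCommGroup (FrobMod A) := ‹AddCommGroup A›

/-- The module structure of `A` on `FrobMod A = A` via the Frobenius `a ↦ a^p`;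
`A` is `F`-finite iff `FrobMod A` is a finite module, and `[A^{1/p} : A]` is its rank. -/
noncomputable def frobModule (p : ℕ) (hp : p.Prime) (A : Type*) [CommRing A] [CharP A p] :
    Module A (FrobMod A) :=
  haveI : ExpChar A p := .prime hp
  Module.compHom A (frobenius A p)

/-- The subgroup `M^♮_e` generated by the maps `φ ∘ ρ`, `φ ∈ C_e`, `ρ ∈ Hom_R(M,R)`. -/
def natFam {R : Type*} [CommRing R] (D : ℕ → Set (R →+ R)) (M : Type*) [AddCommGroup M]
    [Module R M] (e : ℕ) : Set (M →+ R) :=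
  (AddSubgroup.closure
    { ϑ : M →+ R | ∃ φ ∈ D e, ∃ ρ : M →ₗ[R] R, ϑ = φ.comp ρ.toAddMonoidHom } : Set (M →+ R))

/-!
Let `c ≠ 0` and let `α : R ^ g → M`, `β : M → R ^ g` be linear maps whose composites are both
multiplication by `c`. Restricting along `α` or `β` compares `M^♮_e`, reduced modulo `m`, with the
`g`-fold sum of the reductions of `C_e`, and the error is bounded by the length of the module of
`p^e`-semilinear maps `N → k`, where `N` is a cokernel killed by `c`. Pick `s ⊆ m` with
`#s ≤ d - 1` such that `R/(c, s)` has finite length. Since semilinear maps to `k` kill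
`s^{[p^e]} N`, they factor through a module of length `O(p^{e(d-1)})`, and each simple subquotient
of the latter contributes at most `[k^{1/p^e} : k] = r_k^e`. Hence the error is
`O(p^{e(d-1)} r_k^e)`, which vanishes after division by `p^{ed} r_k^e`.
-/

open IsLocalRing

section Length

variable {R A B : Type*} [CommRing R] [AddCommGroup A] [Module R A] [AddCommGroup B] [Module R B]

theorem length_eq_length_map_add_length_inf_ker (f : A →ₗ[R] B) (P : Submodule R A) :
    Module.length R P = Module.length R (P.map f) + Module.length R ↥(P ⊓ LinearMap.ker f) := by
  rw [add_comm]
  refine Module.length_eq_add_of_exact (Submodule.inclusion inf_le_left) (f.submoduleMap P)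
    (Submodule.inclusion_injective _) (f.submoduleMap_surjective P) fun x => ?_
  simp [Subtype.ext_iff, LinearMap.submoduleMap]

theorem length_mono {P Q : Submodule R A} (h : P ≤ Q) : Module.length R P ≤ Module.length R Q :=
  Module.length_le_of_injective _ (Submodule.inclusion_injective h)

theorem length_map_le (f : A →ₗ[R] B) (P : Submodule R A) :
    Module.length R (P.map f) ≤ Module.length R P :=
  Module.length_le_of_surjective _ (f.submoduleMap_surjective P)

theorem length_map_eq_length_map_of_forall_eq_zero_iff {E : Type*} [AddCommGroup E] [Module R E]
    {f : A →ₗ[R] B} {g : A →ₗ[R] E} {P : Submodule R A} (h : ∀ x ∈ P, f x = 0 ↔ g x = 0) :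
    Module.length R (P.map f) = Module.length R (P.map g) := by
  have hker : LinearMap.ker (f.domRestrict P) = LinearMap.ker (g.domRestrict P) := by
    ext ⟨x, hx⟩
    exact h x hx
  rw [← LinearMap.range_domRestrict, ← LinearMap.range_domRestrict]
  exact ((f.domRestrict P).quotKerEquivRange.symm ≪≫ₗ Submodule.quotEquivOfEq _ _ hker ≪≫ₗ
    (g.domRestrict P).quotKerEquivRange).length_eq

theorem length_le_card_mul_length_quotient {ι : Type*} [Fintype ι] {v : ι → A}
    (hv : Submodule.span R (Set.range v) = ⊤) {J : Ideal R} (hJ : J ≤ Module.annihilator R A) :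
    Module.length R A ≤ Fintype.card ι * Module.length R (R ⧸ J) := by
  classical
  let f : (ι → R ⧸ J) →ₗ[R] A := LinearMap.lsum R (fun _ => R ⧸ J) R fun i =>
    J.liftQ (LinearMap.toSpanSingleton R A (v i))
      fun r hr => Module.mem_annihilator.mp (hJ hr) (v i)
  have hf : Function.Surjective f := by
    rw [← LinearMap.range_eq_top, ← top_le_iff, ← hv, Submodule.span_le]
    rintro _ ⟨i, rfl⟩
    exact ⟨Pi.single i (Submodule.Quotient.mk 1),
      (LinearMap.lsum_piSingle ..).trans (one_smul R (v i))⟩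
  calc Module.length R A ≤ Module.length R (ι → R ⧸ J) := Module.length_le_of_surjective f hf
    _ = Fintype.card ι * Module.length R (R ⧸ J) := by
      rw [Module.length_pi, ENat.card_eq_coe_fintype_card]

theorem length_le_add_of_ker_le_range {E : Type*} [AddCommGroup E] [Module R E] {f : A →ₗ[R] B}
    {g : B →ₗ[R] E} (h : LinearMap.ker g ≤ LinearMap.range f) :
    Module.length R B ≤ Module.length R A + Module.length R E := by
  rw [← Module.length_top, length_eq_length_map_add_length_inf_ker g ⊤, top_inf_eq, add_comm]
  exact add_le_add ((length_mono h).trans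
      (Module.length_le_of_surjective f.rangeRestrict f.surjective_rangeRestrict))
    (Module.length_le_of_injective _ (Submodule.injective_subtype _))

theorem length_quotient_sup_span_mul_le (J : Ideal R) (x y : R) :
    Module.length R (R ⧸ J ⊔ Ideal.span {x * y}) ≤
      Module.length R (R ⧸ J ⊔ Ideal.span {y}) + Module.length R (R ⧸ J ⊔ Ideal.span {x}) := by
  have hle : J ⊔ Ideal.span {x * y} ≤ J ⊔ Ideal.span {x} :=
    sup_le_sup_left (Ideal.span_singleton_le_span_singleton.mpr (dvd_mul_right x y)) J
  have hmul : J ⊔ Ideal.span {y} ≤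
      Submodule.comap (LinearMap.mulLeft R x) (J ⊔ Ideal.span {x * y}) :=
    sup_le (fun j hj => Ideal.mul_mem_left _ _ (Ideal.mem_sup_left hj))
      ((Ideal.span_singleton_le_iff_mem _).mpr
        (Ideal.mem_sup_right (Ideal.mem_span_singleton_self _)))
  refine length_le_add_of_ker_le_range (f := Submodule.mapQ _ _ (LinearMap.mulLeft R x) hmul)
    (g := Submodule.factor hle) ?_
  rw [Submodule.range_mapQ, Submodule.factor, Submodule.mapQ, Submodule.ker_liftQ,
    LinearMap.comp_id, Submodule.ker_mkQ]
  rw [Submodule.map_le_iff_le_comap, Submodule.comap_map_mkQ]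
  exact sup_le_sup le_sup_left ((Ideal.span_singleton_le_iff_mem _).mpr ⟨1, mul_one x⟩)

theorem length_quotient_sup_span_pow_le (J : Ideal R) (x : R) (n : ℕ) :
    Module.length R (R ⧸ J ⊔ Ideal.span {x ^ n}) ≤
      n * Module.length R (R ⧸ J ⊔ Ideal.span {x}) := by
  induction n with
  | zero =>
    have : Subsingleton (R ⧸ J ⊔ Ideal.span {x ^ 0}) :=
      Ideal.Quotient.subsingleton_iff.mpr (by simp)
    simp only [Module.length_eq_zero, zero_le]
  | succ n ih =>
    rw [pow_succ', Nat.cast_succ, add_mul, one_mul]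
    exact (length_quotient_sup_span_mul_le J x (x ^ n)).trans (add_le_add_left ih _)

theorem length_quotient_sup_span_image_pow_le (J : Ideal R) (s : Finset R) (n : ℕ) :
    Module.length R (R ⧸ J ⊔ Ideal.span ((· ^ n) '' (s : Set R))) ≤
      n ^ s.card * Module.length R (R ⧸ J ⊔ Ideal.span (s : Set R)) := by
  classical
  induction s using Finset.induction_on generalizing J with
  | empty => rw [Finset.coe_empty, Set.image_empty, Finset.card_empty, pow_zero, one_mul]
  | insert x s hx ih =>
    rw [Finset.coe_insert, Set.image_insert_eq, Ideal.span_insert, Ideal.span_insert, ← sup_assoc,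
      ← sup_assoc, Finset.card_insert_of_notMem hx, pow_succ, mul_assoc]
    calc
      _ ≤ n ^ s.card * Module.length R (R ⧸ J ⊔ Ideal.span {x ^ n} ⊔ Ideal.span (s : Set R)) := ih _
      _ ≤ _ := by
        rw [sup_right_comm J, sup_right_comm J (Ideal.span {x})]
        exact mul_le_mul_right (length_quotient_sup_span_pow_le _ x n) _

end Length

section Parameters

variable {R : Type*} [CommRing R] [IsNoetherianRing R] [IsLocalRing R]

theorem length_quotient_ne_top_of_mem_minimalPrimes {J : Ideal R}
    (hJ : maximalIdeal R ∈ J.minimalPrimes) : Module.length R (R ⧸ J) ≠ ⊤ := by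
  have := quotient_artinian_of_mem_minimalPrimes_of_isLocalRing J hJ
  rw [Module.length_eq_of_surjective (R := R ⧸ J) (M := R ⧸ J) Ideal.Quotient.mk_surjective]
  exact Module.length_ne_top

theorem exists_finset_card_lt_length_quotient_sup_span_ne_top {c : R} (hc : c ∈ nonZeroDivisors R)
    (hcu : ¬ IsUnit c) {d : ℕ} (hd : ringKrullDim R = d) :
    ∃ s : Finset R, s.card < d ∧ (s : Set R) ⊆ maximalIdeal R ∧
      Module.length R (R ⧸ Ideal.span {c} ⊔ Ideal.span (s : Set R)) ≠ ⊤ := by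
  classical
  set I := Ideal.span {c}
  have hsurj : Function.Surjective (Ideal.Quotient.mk I) := Ideal.Quotient.mk_surjective
  have : Nontrivial (R ⧸ I) :=
    Ideal.Quotient.nontrivial_iff.mpr (Ideal.span_singleton_eq_top.not.mpr hcu)
  have : IsLocalRing (R ⧸ I) := .of_surjective' _ hsurj
  have : IsLocalHom (Ideal.Quotient.mk I) := .of_surjective _ hsurj
  obtain ⟨t, ht, htcard⟩ :=
    (maximalIdeal (R ⧸ I)).exists_finset_card_eq_height_of_isNoetherianRing
  have hdim : t.card + 1 ≤ d := by
    have := ringKrullDim_quotient_succ_le_of_nonZeroDivisor hc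
    rw [hd, ← maximalIdeal_height_eq_ringKrullDim, ← htcard] at this
    exact_mod_cast this
  obtain ⟨s, rfl, hs⟩ : ∃ s : Finset R, s.image (Ideal.Quotient.mk I) = t ∧ s.card ≤ t.card :=
    ⟨t.image (Function.surjInv hsurj), by
      rw [Finset.image_image, (Function.rightInverse_surjInv hsurj).comp_eq_id, Finset.image_id],
      Finset.card_image_le⟩
  have hmin : maximalIdeal R ∈ (I ⊔ Ideal.span (s : Set R)).minimalPrimes := by
    rw [← maximalIdeal_comap (Ideal.Quotient.mk I), sup_comm]
    conv in I => rw [← Ideal.mk_ker (I := I)]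
    rw [← Ideal.comap_map_of_surjective' _ hsurj, Ideal.map_span, ← Finset.coe_image,
      Ideal.comap_minimalPrimes_eq_of_surjective hsurj]
    exact Set.mem_image_of_mem _ ht
  exact ⟨s, by omega, fun x hx => hmin.1.2 (Ideal.mem_sup_right (Ideal.subset_span hx)),
    length_quotient_ne_top_of_mem_minimalPrimes hmin⟩

end Parameters

theorem exists_ne_zero_isogeny_pi_finrank (R M : Type*) [CommRing R] [IsDomain R] [AddCommGroup M]
    [Module R M] [Module.Finite R M] :
    ∃ (c : R) (α : (Fin (Module.finrank R M) → R) →ₗ[R] M)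
      (β : M →ₗ[R] (Fin (Module.finrank R M) → R)),
      c ≠ 0 ∧ α ∘ₗ β = c • LinearMap.id ∧ β ∘ₗ α = c • LinearMap.id := by
  obtain ⟨v, hv⟩ := exists_linearIndependent_of_le_finrank (le_refl (Module.finrank R M))
  let P := Submodule.span R (Set.range v)
  have htorsion : Module.IsTorsion R (M ⧸ P) := by
    rw [← Module.finrank_eq_zero_iff_isTorsion]
    have hP : Module.finrank R P = Module.finrank R M := by
      simpa using finrank_span_eq_card hv
    have := P.finrank_quotient_add_finrank
    omega
  obtain ⟨c, hcP, hc⟩ := Submodule.annihilator_top_inter_nonZeroDivisors htorsion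
  have hcP : ∀ x : M, c • x ∈ P := fun x => by
    rw [← Submodule.Quotient.mk_eq_zero, Submodule.Quotient.mk_smul]
    exact Submodule.mem_annihilator.mp hcP _ Submodule.mem_top
  let coords := (Module.Basis.span hv).equivFun
  refine ⟨c, P.subtype ∘ₗ coords.symm.toLinearMap,
    coords.toLinearMap ∘ₗ (LinearMap.lsmul R M c).codRestrict P hcP, nonZeroDivisors.ne_zero hc,
    LinearMap.ext fun x => ?_, LinearMap.ext fun y => ?_⟩
  · exact congrArg Subtype.val (coords.symm_apply_apply ⟨c • x, hcP x⟩)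
  · have hsmul :
        (LinearMap.lsmul R M c).codRestrict P hcP (coords.symm y) = c • coords.symm y := rfl
    exact (congrArg coords hsmul).trans (by rw [map_smul, coords.apply_symm_apply]; rfl)

universe u

section FrobeniusBasis

/-- The finite family `b` spans `k` over its subring of `q`-th powers. Stated without mentioning
that subring, so that it makes sense for every exponent. -/
def SpansOverPowers {ι k : Type*} [Fintype ι] [CommSemiring k] (q : ℕ) (b : ι → k) : Prop :=
  ∀ y, ∃ r : ι → k, y = ∑ i, r i ^ q * b i

theorem SpansOverPowers.mul {ι κ k : Type*} [Fintype ι] [Fintype κ] [CommSemiring k] {p : ℕ}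
    [ExpChar k p] {n e : ℕ} {b : ι → k} {c : κ → k} (hb : SpansOverPowers (p ^ n) b)
    (hc : SpansOverPowers (p ^ e) c) :
    SpansOverPowers (p ^ (n + e)) fun ij : ι × κ => b ij.1 ^ p ^ e * c ij.2 := by
  intro y
  obtain ⟨r, rfl⟩ := hc y
  choose s hs using fun j => hb (r j)
  refine ⟨fun ij => s ij.2 ij.1, ?_⟩
  rw [Fintype.sum_prod_type_right]
  refine Finset.sum_congr rfl fun j _ => ?_
  rw [hs j, sum_pow_char_pow, Finset.sum_mul]
  exact Finset.sum_congr rfl fun i _ => by rw [mul_pow, ← pow_mul, ← pow_add, mul_assoc]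

theorem SpansOverPowers.exists_pow {ι : Type u} {k : Type*} [Fintype ι] [CommSemiring k] {p : ℕ}
    [ExpChar k p] {b : ι → k} (hb : SpansOverPowers p b) (e : ℕ) :
    ∃ (κ : Type u) (_ : Fintype κ) (b' : κ → k),
      Fintype.card κ = Fintype.card ι ^ e ∧ SpansOverPowers (p ^ e) b' := by
  induction e with
  | zero => exact ⟨PUnit, inferInstance, fun _ => 1, by simp, fun y => ⟨fun _ => y, by simp⟩⟩
  | succ e ih =>
    obtain ⟨κ, _, b', hcard, hb'⟩ := ih
    exact ⟨κ × ι, inferInstance, _, by rw [Fintype.card_prod, hcard, pow_succ],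
      hb'.mul ((pow_one p).symm ▸ hb)⟩

theorem exists_spansOverPowers_finrank_frobMod {p : ℕ} (hp : p.Prime) (k : Type*) [Field k]
    [CharP k p] (hk : letI := frobModule p hp k; Module.Finite k (FrobMod k)) :
    letI := frobModule p hp k
    ∃ b : Fin (Module.finrank k (FrobMod k)) → k, SpansOverPowers p b := by
  let := frobModule p hp k
  let basis := Module.finBasis k (FrobMod k)
  exact ⟨basis, fun y => ⟨basis.repr y, (basis.sum_repr y).symm⟩⟩

theorem finite_frobMod_of_surjective {p : ℕ} (hp : p.Prime) {A B : Type*} [CommRing A] [CommRing B]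
    [CharP A p] [CharP B p] (hA : letI := frobModule p hp A; Module.Finite A (FrobMod A))
    {f : A →+* B} (hf : Function.Surjective f) :
    letI := frobModule p hp B
    Module.Finite B (FrobMod B) := by
  let := frobModule p hp A
  let := frobModule p hp B
  have : ExpChar A p := .prime hp
  have : ExpChar B p := .prime hp
  have : RingHomSurjective f := ⟨hf⟩
  let frobMap : FrobMod A →ₛₗ[f] FrobMod B :=
    { toFun := f
      map_add' := map_add f
      map_smul' := fun a x => by
        change f (frobenius A p a * show A from x) = frobenius B p (f a) * f x
        rw [map_mul, f.map_frobenius] }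
  exact Module.Finite.of_surjective frobMap hf

end FrobeniusBasis

section CartierMaps

variable {p : ℕ} {R : Type*} [CommRing R] {e : ℕ} {N N' Y : Type*} [AddCommGroup N] [Module R N]
  [AddCommGroup N'] [Module R N'] [AddCommGroup Y] [Module R Y]

variable (Y) in
/-- Precomposition with `h` on additive maps to `Y`, linear for the action of `R` on the values. -/
def precomp (h : N →ₗ[R] N') : (N' →+ Y) →ₗ[R] (N →+ Y) where
  toFun θ := θ.comp h.toAddMonoidHom
  map_add' _ _ := rfl
  map_smul' _ _ := rfl

@[simp]
theorem precomp_apply (h : N →ₗ[R] N') (θ : N' →+ Y) (x : N) : precomp Y h θ x = θ (h x) := rfl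

variable (p R e N Y) in
/-- The `R`-module of `p^e`-semilinear Cartier maps `N → Y`, with `R` acting on the values. -/
def cartierMaps : Submodule R (N →+ Y) where
  carrier := {θ | IsCartierMap p R e θ}
  add_mem' hθ hη r x := by
    rw [AddMonoidHom.add_apply, AddMonoidHom.add_apply, hθ, hη, smul_add]
  zero_mem' r _ := (smul_zero r).symm
  smul_mem' a θ hθ r x := by
    rw [AddMonoidHom.smul_apply, AddMonoidHom.smul_apply, hθ, smul_comm]

theorem map_precomp_cartierMaps_le (h : N →ₗ[R] N') :
    (cartierMaps p R e N' Y).map (precomp Y h) ≤ cartierMaps p R e N Y := by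
  rintro _ ⟨θ, hθ, rfl⟩ r x
  rw [precomp_apply, precomp_apply, map_smul, hθ]

theorem mem_map_precomp_mkQ {P : Submodule R N} {θ : N →+ Y} (hθ : θ ∈ cartierMaps p R e N Y)
    (hP : ∀ x ∈ P, θ x = 0) : θ ∈ (cartierMaps p R e (N ⧸ P) Y).map (precomp Y P.mkQ) := by
  refine ⟨QuotientAddGroup.lift P.toAddSubgroup θ hP, fun r y => ?_, AddMonoidHom.ext fun x => rfl⟩
  obtain ⟨x, rfl⟩ := P.mkQ_surjective y
  exact hθ r x

theorem inf_ker_precomp_le_map_precomp_mkQ_range {S : Submodule R (N →+ Y)}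
    (hS : S ≤ cartierMaps p R e N Y) (h : N' →ₗ[R] N) :
    S ⊓ LinearMap.ker (precomp Y h) ≤
      (cartierMaps p R e (N ⧸ LinearMap.range h) Y).map (precomp Y (LinearMap.range h).mkQ) := by
  rintro θ ⟨hθ, hker⟩
  refine mem_map_precomp_mkQ (hS hθ) ?_
  rintro _ ⟨x, rfl⟩
  exact DFunLike.congr_fun hker x

theorem length_le_length_map_precomp_add {S : Submodule R (N →+ Y)}
    (hS : S ≤ cartierMaps p R e N Y) (h : N' →ₗ[R] N) :
    Module.length R S ≤ Module.length R (S.map (precomp Y h)) +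
      Module.length R (cartierMaps p R e (N ⧸ LinearMap.range h) Y) := by
  rw [length_eq_length_map_add_length_inf_ker (precomp Y h) S]
  exact add_le_add le_rfl
    ((length_mono (inf_ker_precomp_le_map_precomp_mkQ_range hS h)).trans (length_map_le _ _))

theorem length_cartierMaps_le_add (P : Submodule R N) :
    Module.length R (cartierMaps p R e N Y) ≤
      Module.length R (cartierMaps p R e P Y) + Module.length R (cartierMaps p R e (N ⧸ P) Y) := by
  have := length_le_length_map_precomp_add (le_refl (cartierMaps p R e N Y)) P.subtype
  rw [P.range_subtype] at this
  exact this.trans (add_le_add_left (length_mono (map_precomp_cartierMaps_le _)) _)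

theorem length_cartierMaps_le_of_surjective {h : N' →ₗ[R] N} (hh : Function.Surjective h) :
    Module.length R (cartierMaps p R e N Y) ≤ Module.length R (cartierMaps p R e N' Y) := by
  have hinj : Function.Injective (precomp Y h) := fun θ η hθη => AddMonoidHom.ext fun x => by
    obtain ⟨x, rfl⟩ := hh x
    exact DFunLike.congr_fun hθη x
  rw [(Submodule.equivMapOfInjective _ hinj _).length_eq]
  exact length_mono (map_precomp_cartierMaps_le h)

variable [IsLocalRing R]

theorem length_cartierMaps_residueField_le_card_mul {ι : Type*} [Fintype ι]
    {b : ι → ResidueField R} (hb : SpansOverPowers (p ^ e) b) :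
    Module.length R (cartierMaps p R e (ResidueField R) Y) ≤
      Fintype.card ι * Module.length R Y := by
  let evalAt : (ResidueField R →+ Y) →ₗ[R] (ι → Y) :=
    { toFun := fun θ i => θ (b i)
      map_add' := fun _ _ => rfl
      map_smul' := fun _ _ => rfl }
  have hker : cartierMaps p R e (ResidueField R) Y ⊓ LinearMap.ker evalAt = ⊥ := by
    refine (Submodule.eq_bot_iff _).mpr fun θ hθ => AddMonoidHom.ext fun y => ?_
    obtain ⟨r, rfl⟩ := hb y
    choose a ha using fun i => residue_surjective (r i)
    refine (map_sum θ _ _).trans (Finset.sum_eq_zero fun i _ => ?_)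
    rw [← ha, ← map_pow, ← ResidueField.algebraMap_eq, ← Algebra.smul_def, hθ.1,
      show θ (b i) = 0 from congrFun hθ.2 i, smul_zero]
  rw [length_eq_length_map_add_length_inf_ker evalAt, hker, Module.length_bot, add_zero,
    ← ENat.card_eq_coe_fintype_card, ← Module.length_pi]
  exact Module.length_le_of_injective _ (Submodule.injective_subtype _)

theorem length_cartierMaps_le_card_mul_of_isSimpleModule {ι : Type*} [Fintype ι]
    {b : ι → ResidueField R} (hb : SpansOverPowers (p ^ e) b) [IsSimpleModule R N] :
    Module.length R (cartierMaps p R e N Y) ≤ Fintype.card ι * Module.length R Y := by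
  obtain ⟨I, hI, ⟨equiv⟩⟩ := isSimpleModule_iff_quot_maximal.mp ‹IsSimpleModule R N›
  obtain rfl := IsLocalRing.eq_maximalIdeal hI
  have hsurj : Function.Surjective (equiv.symm.toLinearMap : ResidueField R →ₗ[R] N) :=
    equiv.symm.surjective
  exact (length_cartierMaps_le_of_surjective hsurj).trans
    (length_cartierMaps_residueField_le_card_mul hb)

theorem length_cartierMaps_le_card_mul_length {ι : Type*} [Fintype ι] {b : ι → ResidueField R}
    (hb : SpansOverPowers (p ^ e) b) (hN : IsFiniteLength R N) :
    Module.length R (cartierMaps p R e N Y) ≤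
      Fintype.card ι * Module.length R N * Module.length R Y := by
  induction hN with
  | of_subsingleton => simp
  | @of_simple_quotient N _ _ P _ _ ih =>
    rw [Module.length_eq_add_of_exact P.subtype P.mkQ P.injective_subtype P.mkQ_surjective
      (LinearMap.exact_subtype_mkQ P), Module.length_eq_one R (N ⧸ P), mul_add, mul_one, add_mul]
    exact (length_cartierMaps_le_add P).trans
      (add_le_add ih (length_cartierMaps_le_card_mul_of_isSimpleModule hb))

theorem IsCartierMap.apply_eq_zero_of_mem_span_pow_smul_top {θ : N →+ ResidueField R}
    (hθ : IsCartierMap p R e θ) {s : Set R} (hs : s ⊆ maximalIdeal R) {x : N}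
    (hx : x ∈ Ideal.span ((· ^ p ^ e) '' s) • (⊤ : Submodule R N)) : θ x = 0 := by
  have hspan : ∀ r ∈ Ideal.span ((· ^ p ^ e) '' s), ∀ x, θ (r • x) = 0 := fun r hr => by
    induction hr using Submodule.span_induction with
    | mem r hr =>
      obtain ⟨a, ha, rfl⟩ := hr
      intro x
      rw [hθ, Algebra.smul_def, ResidueField.algebraMap_eq, (residue_eq_zero_iff a).mpr (hs ha),
        zero_mul]
    | zero => simp
    | add r t _ _ hr ht => intro x; rw [add_smul, map_add, hr, ht, add_zero]
    | smul a r _ hr => intro x; rw [smul_eq_mul, mul_comm, mul_smul, hr]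
  induction hx using Submodule.smul_induction_on' with
  | smul r hr x _ => exact hspan r hr x
  | add x _ y _ hx hy => rw [map_add, hx, hy, add_zero]

theorem length_residueField : Module.length R (ResidueField R) = 1 :=
  Module.length_eq_one_iff.mpr
    (isSimpleModule_iff_quot_maximal.mpr ⟨_, inferInstance, ⟨LinearEquiv.refl _ _⟩⟩)

theorem length_cartierMaps_residueField_le {ι κ : Type*} [Fintype ι] [Fintype κ]
    {b : ι → ResidueField R} (hb : SpansOverPowers (p ^ e) b) {v : κ → N}
    (hv : Submodule.span R (Set.range v) = ⊤) {I : Ideal R} (hI : I ≤ Module.annihilator R N)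
    {s : Finset R} (hs : (s : Set R) ⊆ maximalIdeal R)
    (hfin : Module.length R (R ⧸ I ⊔ Ideal.span (s : Set R)) ≠ ⊤) :
    Module.length R (cartierMaps p R e N (ResidueField R)) ≤
      Fintype.card ι * (Fintype.card κ * ((p ^ e) ^ s.card *
        Module.length R (R ⧸ I ⊔ Ideal.span (s : Set R)))) := by
  let J := Ideal.span ((· ^ p ^ e) '' (s : Set R))
  let P := J • (⊤ : Submodule R N)
  have hann : I ⊔ J ≤ Module.annihilator R (N ⧸ P) :=
    sup_le (hI.trans (P.mkQ.annihilator_le_of_surjective P.mkQ_surjective)) fun r hr => by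
      rw [Submodule.annihilator_quotient, Submodule.mem_colon]
      exact fun x _ => Submodule.smul_mem_smul hr Submodule.mem_top
  have hspan : Submodule.span R (Set.range (P.mkQ ∘ v)) = ⊤ := by
    rw [Set.range_comp, Submodule.span_image, hv, Submodule.map_top, P.range_mkQ]
  have hlength : Module.length R (N ⧸ P) ≤ Fintype.card κ * ((p ^ e) ^ s.card *
      Module.length R (R ⧸ I ⊔ Ideal.span (s : Set R))) :=
    (length_le_card_mul_length_quotient hspan hann).trans
      (mul_le_mul_right (mod_cast length_quotient_sup_span_image_pow_le I s (p ^ e)) _)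
  have hfinite : IsFiniteLength R (N ⧸ P) :=
    Module.length_ne_top_iff.mp (ne_top_of_le_ne_top (WithTop.mul_ne_top (ENat.natCast_ne_top _)
      (WithTop.mul_ne_top (mod_cast ENat.natCast_ne_top ((p ^ e) ^ s.card)) hfin)) hlength)
  calc
    _ ≤ Module.length R ((cartierMaps p R e (N ⧸ P) (ResidueField R)).map (precomp _ P.mkQ)) :=
      length_mono fun θ hθ => mem_map_precomp_mkQ hθ fun x hx =>
        IsCartierMap.apply_eq_zero_of_mem_span_pow_smul_top hθ hs hx
    _ ≤ Module.length R (cartierMaps p R e (N ⧸ P) (ResidueField R)) := length_map_le _ _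
    _ ≤ Fintype.card ι * Module.length R (N ⧸ P) := by
      simpa only [length_residueField, mul_one] using
        length_cartierMaps_le_card_mul_length (Y := ResidueField R) hb hfinite
    _ ≤ _ := mul_le_mul_right hlength _

end CartierMaps

theorem exists_forall_pow_mul_length_cartierMaps_le {p : ℕ} {R : Type*} [CommRing R]
    [IsNoetherianRing R] [IsLocalRing R] [ExpChar (ResidueField R) p] {d : ℕ}
    (hd : ringKrullDim R = d) {ι : Type*} [Fintype ι] {b : ι → ResidueField R}
    (hb : SpansOverPowers p b) {N : Type*} [AddCommGroup N] [Module R N] [Module.Finite R N] {c : R}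
    (hc : c ∈ nonZeroDivisors R) (hcN : c ∈ Module.annihilator R N) :
    ∃ B : ℕ, ∀ e : ℕ, p ^ e * Module.length R (cartierMaps p R e N (ResidueField R)) ≤
      B * (p ^ (e * d) * Fintype.card ι ^ e) := by
  by_cases hu : IsUnit c
  · have : Subsingleton N := Module.annihilator_eq_top_iff.mp (Ideal.eq_top_of_isUnit_mem _ hcN hu)
    exact ⟨0, fun e => by simp⟩
  obtain ⟨s, hsd, hs, hfin⟩ := exists_finset_card_lt_length_quotient_sup_span_ne_top hc hu hd
  obtain ⟨n, v, hv⟩ := Module.Finite.exists_fin (R := R) (M := N)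
  obtain ⟨L, hL⟩ := ENat.ne_top_iff_exists.mp hfin
  refine ⟨n * L, fun e => ?_⟩
  obtain ⟨κ, _, b', hcard, hb'⟩ := hb.exists_pow e
  have hbound := length_cartierMaps_residueField_le hb' hv
    ((Ideal.span_singleton_le_iff_mem _).mpr hcN) hs hfin
  rw [← hL, Fintype.card_fin, hcard] at hbound
  have hpow : p ^ e * (p ^ e) ^ s.card ≤ p ^ (e * d) := by
    rw [← pow_succ', ← pow_mul]
    exact Nat.pow_le_pow_right (expChar_pos (ResidueField R) p) (Nat.mul_le_mul_left e hsd)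
  calc
    _ ≤ (p ^ e : ℕ∞) * ((Fintype.card ι ^ e : ℕ) * (n * ((p ^ e) ^ s.card * L))) :=
      mul_le_mul_right hbound _
    _ = ((n * L * (p ^ e * (p ^ e) ^ s.card * Fintype.card ι ^ e) : ℕ) : ℕ∞) := by push_cast; ring
    _ ≤ ((n * L * (p ^ (e * d) * Fintype.card ι ^ e) : ℕ) : ℕ∞) := by gcongr
    _ = _ := by push_cast; rfl

section NatFamilies

theorem CartierStructure.coe_span_natFam {p : ℕ} {R N : Type*} [CommRing R] [AddCommGroup N]
    [Module R N] (C : CartierStructure p R R) {e : ℕ} (he : 1 ≤ e) :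
    (Submodule.span R (natFam C.carrier N e) : Set (N →+ R)) = natFam C.carrier N e := by
  let generators : Set (N →+ R) :=
    {θ | ∃ φ ∈ C.carrier e, ∃ ρ : N →ₗ[R] R, θ = φ.comp ρ.toAddMonoidHom}
  have hsmul (a : R) : AddSubgroup.closure generators ≤
      (AddSubgroup.closure generators).comap (DistribSMul.toAddMonoidHom (N →+ R) a) := by
    rw [AddSubgroup.closure_le]
    rintro _ ⟨φ, hφ, ρ, rfl⟩
    exact AddSubgroup.subset_closure ⟨_, C.smul_mem e he a φ hφ, ρ, rfl⟩
  let generated : Submodule R (N →+ R) :=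
    { AddSubgroup.closure generators with smul_mem' := fun a _ hθ => hsmul a hθ }
  exact congrArg SetLike.coe (Submodule.span_eq generated)

variable {p : ℕ} {R : Type*} [CommRing R] [IsLocalRing R] {D : ℕ → Set (R →+ R)} {e : ℕ}
  {N N' : Type*} [AddCommGroup N] [AddCommGroup N']

variable (R N) in
/-- Reduction of additive maps to `R` modulo the maximal ideal. -/
noncomputable def reduction : (N →+ R) →ₗ[R] (N →+ ResidueField R) where
  toFun θ := (residue R).toAddMonoidHom.comp θ
  map_add' _ _ := AddMonoidHom.ext fun _ => map_add (residue R) _ _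
  map_smul' r _ := AddMonoidHom.ext fun _ => (map_mul (residue R) _ _).trans
    (Algebra.smul_def r _).symm

theorem reduction_eq_zero_iff {θ : N →+ R} :
    reduction R N θ = 0 ↔ ∀ x, θ x ∈ maximalIdeal R :=
  DFunLike.ext_iff.trans (forall_congr' fun x => residue_eq_zero_iff (θ x))

theorem splitNum_eq_length_map_reduction {S : Set (N →+ R)}
    (hS : ∀ θ ∈ Submodule.span R S, θ ∈ S ∨ θ = 0) :
    splitNum R S = (Module.length R ((Submodule.span R S).map (reduction R N)) : ℕ∞) := by
  rw [splitNum, moduleLength, ← Module.coe_length]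
  refine congrArg _ (length_map_eq_length_map_of_forall_eq_zero_iff fun θ hθ => ?_)
  rw [Submodule.mkQ_apply, Submodule.Quotient.mk_eq_zero, reduction_eq_zero_iff]
  refine ⟨fun h => ?_, fun h => ?_⟩
  · have hle : Submodule.span R {ϑ ∈ S | ∀ x, ϑ x ∈ maximalIdeal R} ≤
        LinearMap.ker (reduction R N) :=
      Submodule.span_le.mpr fun η hη => reduction_eq_zero_iff.mpr hη.2
    exact reduction_eq_zero_iff.mp (hle h)
  · rcases hS θ hθ with hθS | rfl
    · exact Submodule.subset_span ⟨hθS, h⟩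
    · exact zero_mem _

variable [Module R N] [Module R N']

/-- The reduction modulo the maximal ideal of the `R`-module generated by the maps `φ ∘ ρ` with
`φ ∈ D e` and `ρ : N → R` linear; its length is the splitting number of `natFam D N e`. -/
noncomputable def reducedNat (D : ℕ → Set (R →+ R)) (N : Type*) [AddCommGroup N] [Module R N]
    (e : ℕ) : Submodule R (N →+ ResidueField R) :=
  (Submodule.span R {θ | ∃ φ ∈ D e, ∃ ρ : N →ₗ[R] R, θ = φ.comp ρ.toAddMonoidHom}).map
    (reduction R N)

theorem reducedNat_le {S : Submodule R (N →+ ResidueField R)}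
    (h : ∀ φ ∈ D e, ∀ ρ : N →ₗ[R] R, reduction R N (φ.comp ρ.toAddMonoidHom) ∈ S) :
    reducedNat D N e ≤ S := by
  rw [reducedNat, Submodule.map_le_iff_le_comap, Submodule.span_le]
  rintro _ ⟨φ, hφ, ρ, rfl⟩
  exact h φ hφ ρ

theorem reduction_comp_mem_reducedNat {φ : R →+ R} (hφ : φ ∈ D e) (ρ : N →ₗ[R] R) :
    reduction R N (φ.comp ρ.toAddMonoidHom) ∈ reducedNat D N e :=
  Submodule.mem_map_of_mem (Submodule.subset_span ⟨φ, hφ, ρ, rfl⟩)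

theorem reducedNat_le_cartierMaps (hD : ∀ φ ∈ D e, IsCartierMap p R e φ) :
    reducedNat D N e ≤ cartierMaps p R e N (ResidueField R) :=
  reducedNat_le fun φ hφ ρ r x => by
    change residue R (φ (ρ (r ^ p ^ e • x))) = r • residue R (φ (ρ x))
    rw [map_smul, hD φ hφ, smul_eq_mul, map_mul, Algebra.smul_def, ResidueField.algebraMap_eq]

theorem map_precomp_reducedNat_le (h : N →ₗ[R] N') :
    (reducedNat D N' e).map (precomp _ h) ≤ reducedNat D N e :=
  Submodule.map_le_iff_le_comap.mpr <|
    reducedNat_le fun _ hφ ρ => reduction_comp_mem_reducedNat hφ (ρ ∘ₗ h)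

theorem length_reducedNat_pi {ι : Type*} [Fintype ι] :
    Module.length R (reducedNat D (ι → N) e) =
      Fintype.card ι * Module.length R (reducedNat D N e) := by
  classical
  let assemble : (ι → reducedNat D N e) →ₗ[R] ((ι → N) →+ ResidueField R) :=
    LinearMap.lsum R _ R fun i =>
      precomp _ (LinearMap.proj i : (ι → N) →ₗ[R] N) ∘ₗ (reducedNat D N e).subtype
  have hassemble (t : ι → reducedNat D N e) (y : ι → N) :
      assemble t y = ∑ i, (t i).1 (y i) := by
    simp [assemble, LinearMap.lsum_apply, AddMonoidHom.finsetSum_apply]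
  have hinj : Function.Injective assemble := by
    refine (injective_iff_map_eq_zero _).mpr fun t ht => ?_
    ext i x
    have := hassemble t (Pi.single i x)
    rw [ht, Finset.sum_eq_single i] at this
    · simpa using this.symm
    · intro j _ hj; simp [hj]
    · simp
  have hrange : LinearMap.range assemble = reducedNat D (ι → N) e := by
    refine le_antisymm ?_ fun θ hθ => ?_
    · rintro _ ⟨t, rfl⟩
      simp only [assemble, LinearMap.lsum_apply, LinearMap.sum_apply]
      exact Submodule.sum_mem _ fun i _ =>
        map_precomp_reducedNat_le _ (Submodule.mem_map_of_mem (t i).2)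
    · refine ⟨fun i => ⟨precomp _ (LinearMap.single R (fun _ => N) i) θ,
        map_precomp_reducedNat_le _ (Submodule.mem_map_of_mem hθ)⟩, AddMonoidHom.ext fun y => ?_⟩
      simp only [hassemble, precomp_apply, LinearMap.single_apply, ← map_sum,
        Finset.univ_sum_single]
  have hlength : Module.length R (ι → reducedNat D N e) =
      Module.length R (LinearMap.range assemble) :=
    (LinearEquiv.ofInjective assemble hinj).length_eq
  rw [← hrange, ← hlength, Module.length_pi, ENat.card_eq_coe_fintype_card]

theorem CartierStructure.splitNum_carrier (C : CartierStructure p R R) (he : 1 ≤ e) :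
    splitNum R (C.carrier e) = (Module.length R (reducedNat C.carrier R e) : ℕ∞) := by
  have hgen : {θ | ∃ φ ∈ C.carrier e, ∃ ρ : R →ₗ[R] R, θ = φ.comp ρ.toAddMonoidHom} =
      C.carrier e := by
    ext θ
    refine ⟨?_, fun hθ => ⟨θ, hθ, LinearMap.id, rfl⟩⟩
    rintro ⟨φ, hφ, ρ, rfl⟩
    convert C.mul_mem e he (ρ 1) φ hφ using 2
    ext x
    change ρ x = ρ 1 * x
    rw [mul_comm, ← smul_eq_mul, ← map_smul, smul_eq_mul, mul_one]
  rw [reducedNat, hgen]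
  refine splitNum_eq_length_map_reduction fun θ hθ => ?_
  induction hθ using Submodule.span_induction with
  | mem θ hθ => exact .inl hθ
  | zero => exact .inr rfl
  | add θ η _ _ hθ hη =>
    rcases hθ with hθ | rfl
    · rcases hη with hη | rfl
      · exact .inl (C.add_mem e he θ hθ η hη)
      · exact .inl ((add_zero θ).symm ▸ hθ)
    · rwa [zero_add]
  | smul a θ _ hθ =>
    rcases hθ with hθ | rfl
    · exact .inl (C.smul_mem e he a θ hθ)
    · exact .inr (smul_zero a)

theorem CartierStructure.splitNum_natFam (C : CartierStructure p R R) (he : 1 ≤ e) :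
    splitNum R (natFam C.carrier N e) = (Module.length R (reducedNat C.carrier N e) : ℕ∞) := by
  have hclosed : ∀ θ ∈ Submodule.span R (natFam C.carrier N e), θ ∈ natFam C.carrier N e :=
    fun θ hθ => (C.coe_span_natFam he).subset hθ
  have hspan : Submodule.span R (natFam C.carrier N e) = Submodule.span R
      {θ | ∃ φ ∈ C.carrier e, ∃ ρ : N →ₗ[R] R, θ = φ.comp ρ.toAddMonoidHom} :=
    le_antisymm
      (Submodule.span_le.mpr <|
        (AddSubgroup.closure_le (Submodule.span R _).toAddSubgroup).mpr Submodule.subset_span)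
      (Submodule.span_mono AddSubgroup.subset_closure)
  rw [splitNum_eq_length_map_reduction fun θ hθ => .inl (hclosed θ hθ), hspan, reducedNat]

theorem exists_forall_pow_mul_length_reducedNat_le [IsNoetherianRing R] [ExpChar (ResidueField R) p]
    (C : CartierStructure p R R) {d : ℕ} (hd : ringKrullDim R = d) {ι : Type*} [Fintype ι]
    {b : ι → ResidueField R} (hb : SpansOverPowers p b) [Module.Finite R N] {c : R}
    (hc : c ∈ nonZeroDivisors R) (f : N' →ₗ[R] N) (hf : ∀ x, c • x ∈ LinearMap.range f) :
    ∃ B : ℕ, ∀ e, 1 ≤ e → p ^ e * Module.length R (reducedNat C.carrier N e) ≤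
      p ^ e * Module.length R (reducedNat C.carrier N' e) +
        B * (p ^ (e * d) * Fintype.card ι ^ e) := by
  have hann : c ∈ Module.annihilator R (N ⧸ LinearMap.range f) := by
    rw [Submodule.annihilator_quotient, Submodule.mem_colon]
    exact fun x _ => hf x
  obtain ⟨B, hB⟩ := exists_forall_pow_mul_length_cartierMaps_le hd hb hc hann
  refine ⟨B, fun e he => ?_⟩
  calc
    _ ≤ (p ^ e : ℕ∞) * (Module.length R (reducedNat C.carrier N' e) + Module.length R
          (cartierMaps p R e (N ⧸ LinearMap.range f) (ResidueField R))) :=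
      mul_le_mul_right ((length_le_length_map_precomp_add
        (reducedNat_le_cartierMaps (C.cartier_mem e he)) f).trans
          (add_le_add_left (length_mono (map_precomp_reducedNat_le f)) _)) _
    _ ≤ _ := by
      rw [mul_add]
      exact add_le_add_right (hB e) _

end NatFamilies

theorem tendsto_div_sub_div_of_forall_pow_mul_le {q B B' : ℝ} (hq : 1 < q) {a b w : ℕ → ℝ}
    (hw : ∀ e, 0 < w e) (hab : ∀ e, 1 ≤ e → q ^ e * a e ≤ q ^ e * b e + B * w e)
    (hba : ∀ e, 1 ≤ e → q ^ e * b e ≤ q ^ e * a e + B' * w e) :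
    Filter.Tendsto (fun e => a e / w e - b e / w e) Filter.atTop (nhds 0) := by
  have hpow : Filter.Tendsto (fun e => (q ^ e)⁻¹) Filter.atTop (nhds 0) :=
    (tendsto_pow_atTop_atTop_of_one_lt hq).inv_tendsto_atTop
  have hlower : Filter.Tendsto (fun e => -(B' * (q ^ e)⁻¹)) Filter.atTop (nhds 0) := by
    simpa only [mul_zero, neg_zero] using (hpow.const_mul B').neg
  have hupper : Filter.Tendsto (fun e => B * (q ^ e)⁻¹) Filter.atTop (nhds 0) := by
    simpa only [mul_zero] using hpow.const_mul B
  refine tendsto_of_tendsto_of_tendsto_of_le_of_le' hlower hupper ?_ ?_ <;>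
    filter_upwards [Filter.eventually_ge_atTop 1] with e he <;>
    have hqe : 0 < q ^ e := pow_pos (zero_lt_one.trans hq) e
  · rw [← sub_div, le_div_iff₀ (hw e), ← mul_le_mul_iff_right₀ hqe]
    have := hba e he
    have : q ^ e * (-(B' * (q ^ e)⁻¹) * w e) = -(B' * w e) := by field_simp
    linarith
  · rw [← sub_div, div_le_iff₀ (hw e), ← mul_le_mul_iff_right₀ hqe]
    have := hab e he
    have : q ^ e * (B * (q ^ e)⁻¹ * w e) = B * w e := by field_simp
    linarith

theorem CartierStructure.exists_forall_pow_mul_length_reducedNat_le_finrank {p : ℕ} {R : Type*}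
    [CommRing R] [IsDomain R] [IsNoetherianRing R] [IsLocalRing R] [ExpChar (ResidueField R) p]
    (C : CartierStructure p R R) {d : ℕ} (hd : ringKrullDim R = d) {ι : Type*} [Fintype ι]
    {b : ι → ResidueField R} (hb : SpansOverPowers p b)
    (M : Type*) [AddCommGroup M] [Module R M] [Module.Finite R M] :
    ∃ B B' : ℕ, ∀ e, 1 ≤ e →
      p ^ e * Module.length R (reducedNat C.carrier M e) ≤
        p ^ e * (Module.finrank R M * Module.length R (reducedNat C.carrier R e)) +
          B * (p ^ (e * d) * Fintype.card ι ^ e) ∧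
      p ^ e * (Module.finrank R M * Module.length R (reducedNat C.carrier R e)) ≤
        p ^ e * Module.length R (reducedNat C.carrier M e) +
          B' * (p ^ (e * d) * Fintype.card ι ^ e) := by
  obtain ⟨c, α, β, hc₀, hαβ, hβα⟩ := exists_ne_zero_isogeny_pi_finrank R M
  have hc := mem_nonZeroDivisors_of_ne_zero hc₀
  obtain ⟨B, hB⟩ := exists_forall_pow_mul_length_reducedNat_le C hd hb hc α
    fun x => ⟨β x, LinearMap.congr_fun hαβ x⟩
  obtain ⟨B', hB'⟩ := exists_forall_pow_mul_length_reducedNat_le C hd hb hc β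
    fun y => ⟨α y, LinearMap.congr_fun hβα y⟩
  simp only [length_reducedNat_pi, Fintype.card_fin] at hB hB'
  exact ⟨B, B', fun e he => ⟨hB e he, hB' e he⟩⟩

theorem splittingRatio_natFam_eq_rank_mul_fSignature_general
    {p : ℕ} (hp : p.Prime) {R : Type*} [CommRing R] [IsDomain R] [IsNoetherianRing R]
    [IsLocalRing R] [CharP (ResidueField R) p]
    (hk : letI := frobModule p hp (ResidueField R)
      Module.Finite (ResidueField R) (FrobMod (ResidueField R)))
    (C : CartierStructure p R R) (M : Type*) [AddCommGroup M] [Module R M] [Module.Finite R M]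
    {aR : ℕ → ℕ} (haR : ∀ e, 1 ≤ e → ((aR e : ℕ∞) : WithBot ℕ∞) = splitNum R (C.carrier e))
    {d : ℕ} (hd : ringKrullDim R = d) {rk : ℕ}
    (hrk : letI := frobModule p hp (ResidueField R)
      rk = Module.finrank (ResidueField R) (FrobMod (ResidueField R)))
    {ι : Type*} {l : Filter ι} {u : ι → ℕ} (hu : Filter.Tendsto u l Filter.atTop) {s : ℝ}
    (hs : Filter.Tendsto
      (fun i => (aR (u i) : ℝ) / ((p : ℝ) ^ (u i * d) * (rk : ℝ) ^ u i)) l (nhds s)) :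
    ∃ aM : ℕ → ℕ,
      (∀ e, 1 ≤ e → ((aM e : ℕ∞) : WithBot ℕ∞) = splitNum R (natFam C.carrier M e)) ∧
      Filter.Tendsto (fun i => (aM (u i) : ℝ) / ((p : ℝ) ^ (u i * d) * (rk : ℝ) ^ u i))
        l (nhds (Module.finrank R M * s)) := by
  let := frobModule p hp (ResidueField R)
  have : ExpChar (ResidueField R) p := .prime hp
  have : Nontrivial (FrobMod (ResidueField R)) := inferInstanceAs (Nontrivial (ResidueField R))
  have hrk_pos : 0 < rk := hrk ▸ Module.finrank_pos
  obtain ⟨b, hb⟩ := exists_spansOverPowers_finrank_frobMod hp _ hk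
  obtain ⟨B, B', hB⟩ := C.exists_forall_pow_mul_length_reducedNat_le_finrank hd hb M
  rw [Fintype.card_fin, ← hrk] at hB
  have hlenR e (he : 1 ≤ e) : Module.length R (reducedNat C.carrier R e) = aR e :=
    WithBot.coe_injective ((C.splitNum_carrier he).symm.trans (haR e he).symm)
  have hlenM e (he : 1 ≤ e) : ∃ n : ℕ, (n : ℕ∞) = Module.length R (reducedNat C.carrier M e) := by
    refine ENat.ne_top_iff_exists.mp fun htop => ?_
    have := (hB e he).1
    rw [htop, hlenR e he, ENat.mul_top (mod_cast (pow_pos hp.pos e).ne'), top_le_iff] at this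
    exact ENat.natCast_ne_top (p ^ e * (Module.finrank R M * aR e) + B * (p ^ (e * d) * rk ^ e))
      (mod_cast this)
  choose! aM haM using hlenM
  refine ⟨aM, fun e he => haM e he ▸ (C.splitNum_natFam he).symm, ?_⟩
  have hbounds e (he : 1 ≤ e) :
      p ^ e * aM e ≤ p ^ e * (Module.finrank R M * aR e) + B * (p ^ (e * d) * rk ^ e) ∧
        p ^ e * (Module.finrank R M * aR e) ≤ p ^ e * aM e + B' * (p ^ (e * d) * rk ^ e) := by
    have := hB e he
    rw [← haM e he, hlenR e he] at this
    exact_mod_cast this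
  have hsub := (tendsto_div_sub_div_of_forall_pow_mul_le (q := p) (B := B) (B' := B')
    (a := fun e => aM e) (b := fun e => Module.finrank R M * aR e)
    (w := fun e => p ^ (e * d) * rk ^ e) (mod_cast hp.one_lt)
    (fun e => mod_cast Nat.mul_pos (pow_pos hp.pos _) (pow_pos hrk_pos e))
    (fun e he => mod_cast (hbounds e he).1)
    (fun e he => mod_cast (hbounds e he).2)).comp hu
  simpa only [Function.comp_def, mul_div_assoc, sub_add_cancel, zero_add] using
    hsub.add (hs.const_mul (Module.finrank R M : ℝ))

/-- **Generalization of a theorem of Tucker:** the normalized splitting numbers of `M^♮`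
converge to `(rank M) · s(R, C)`. -/
theorem splittingRatio_natFam_eq_rank_mul_fSignature
    (p : ℕ) (hp : p.Prime) (R : Type*) [CommRing R] [IsDomain R] [IsNoetherianRing R]
    [IsLocalRing R] [CharP R p]
    (hFf : letI := frobModule p hp R; Module.Finite R (FrobMod R))
    (K : Type*) [Field K] [Algebra R K] [IsFractionRing R K]
    (C : CartierStructure p R R)
    (M : Type*) [AddCommGroup M] [Module R M] [Module.Finite R M]
    (g : ℕ) (hg : g = Module.finrank K (TensorProduct R K M))
    (aR : ℕ → ℕ)
    (haR : ∀ e, 1 ≤ e → ((aR e : ℕ∞) : WithBot ℕ∞) = splitNum R (C.carrier e))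
    (hex : ∃ e, 1 ≤ e ∧ aR e ≠ 0)
    (n₀ : ℕ) (hn₀pos : 0 < n₀)
    (hn₀dvd : ∀ e, 1 ≤ e → aR e ≠ 0 → n₀ ∣ e)
    (hn₀gcd : ∀ m : ℕ, (∀ e, 1 ≤ e → aR e ≠ 0 → m ∣ e) → m ∣ n₀)
    (d : ℕ) (hd : ringKrullDim R = d)
    [CharP (IsLocalRing.ResidueField R) p]
    (rk : ℕ)
    (hrk : letI := frobModule p hp (IsLocalRing.ResidueField R)
      rk = Module.finrank (IsLocalRing.ResidueField R) (FrobMod (IsLocalRing.ResidueField R)))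
    (s : ℝ)
    (hs : Filter.Tendsto
      (fun e : ℕ => (aR (n₀ * e) : ℝ) / ((p : ℝ) ^ (n₀ * e * d) * (rk : ℝ) ^ (n₀ * e)))
      Filter.atTop (nhds s)) :
    ∃ aM : ℕ → ℕ,
      (∀ e, 1 ≤ e → ((aM e : ℕ∞) : WithBot ℕ∞) = splitNum R (natFam C.carrier M e)) ∧
      Filter.Tendsto
        (fun e : ℕ => (aM (n₀ * e) : ℝ) / ((p : ℝ) ^ (n₀ * e * d) * (rk : ℝ) ^ (n₀ * e)))
        Filter.atTop (nhds ((g : ℝ) * s)) := by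
  obtain rfl := (TensorProduct.isBaseChange R M K).finrank_eq ▸ hg
  exact splittingRatio_natFam_eq_rank_mul_fSignature_general hp
    (finite_frobMod_of_surjective hp hFf IsLocalRing.residue_surjective) C M haR hd hrk
    (Filter.tendsto_id.const_mul_atTop' hn₀pos) hs
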